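/- Let R be a ring with total quotient ring T = Tot(R). Then R + XT[X] (the subring of T[X] of polynomials with constant term in R) is a semihereditary ring if and only if R is semihereditary and T is absolutely flat (von Neumann regular). -/

import Mathlib

/-- A semihereditary ring: every finitely generated ideal is projective. -/
def IsSemihereditary (R : Type*) [CommRing R] : Prop :=
  ∀ I : Ideal R, I.FG → Module.Projective R I

open Polynomial

section Criterion

/-- Every principal ideal is projective: each annihilator is generated by an idempotent
`1 - f`. -/
def HasIdempotentSupports (R : Type*) [CommRing R] : Prop :=
  ∀ a : R, ∃ f : R, f * a = a ∧ ∀ r : R, r * a = 0 → r * f = 0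

/-- Every two-generated ideal is locally principal. -/
def IsArithmeticalRing (R : Type*) [CommRing R] : Prop :=
  ∀ a b : R, ∃ u v w : R, u * a = v * b ∧ (1 - u) * b = w * a

variable {R : Type*} [CommRing R]

theorem IsSemihereditary.hasIdempotentSupports (h : IsSemihereditary R) :
    HasIdempotentSupports R := by
  intro a
  have := h (Ideal.span {a}) (Submodule.fg_span_singleton a)
  let g : R →ₗ[R] Ideal.span {a} :=
    LinearMap.toSpanSingleton R _ ⟨a, Ideal.mem_span_singleton_self a⟩
  have hg : Function.Surjective g := by
    rintro ⟨x, hx⟩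
    obtain ⟨c, rfl⟩ := Ideal.mem_span_singleton'.1 hx
    exact ⟨c, by ext; simp [g]⟩
  obtain ⟨s, hs⟩ := Module.projective_lifting_property g LinearMap.id hg
  refine ⟨s ⟨a, Ideal.mem_span_singleton_self a⟩, ?_, fun r hr ↦ ?_⟩
  · simpa [g] using congrArg Subtype.val
      (LinearMap.congr_fun hs ⟨a, Ideal.mem_span_singleton_self a⟩)
  · rw [← smul_eq_mul, ← map_smul]
    convert map_zero s
    exact Subtype.ext hr

theorem IsSemihereditary.isArithmeticalRing (h : IsSemihereditary R) :
    IsArithmeticalRing R := by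
  intro a b
  have := h (Ideal.span {a, b}) (Submodule.fg_span (Set.toFinite _))
  have ha : a ∈ Ideal.span {a, b} := Ideal.subset_span (by simp)
  have hb : b ∈ Ideal.span {a, b} := Ideal.subset_span (by simp)
  let g : R × R →ₗ[R] Ideal.span {a, b} :=
    (LinearMap.toSpanSingleton R _ ⟨a, ha⟩).coprod (LinearMap.toSpanSingleton R _ ⟨b, hb⟩)
  have hg : Function.Surjective g := by
    rintro ⟨x, hx⟩
    obtain ⟨c, d, rfl⟩ := Ideal.mem_span_pair.1 hx
    exact ⟨(c, d), by ext; simp [g]⟩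
  obtain ⟨s, hs⟩ := Module.projective_lifting_property g LinearMap.id hg
  have hsb : (s ⟨b, hb⟩).1 * a + (s ⟨b, hb⟩).2 * b = b := by
    simpa [g] using congrArg Subtype.val (LinearMap.congr_fun hs ⟨b, hb⟩)
  have hab : a • s ⟨b, hb⟩ = b • s ⟨a, ha⟩ := by
    rw [← map_smul, ← map_smul]
    congr 1
    exact Subtype.ext (mul_comm a b)
  have hab' : a * (s ⟨b, hb⟩).2 = b * (s ⟨a, ha⟩).2 := congrArg Prod.snd hab
  exact ⟨(s ⟨b, hb⟩).2, (s ⟨a, ha⟩).2, (s ⟨b, hb⟩).1, by linear_combination hab',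
    by linear_combination -hsb⟩

/-- The multipliers `s` with `s I ⊆ (a) ⊆ I` for some `a` generate the unit ideal. -/
theorem IsArithmeticalRing.span_multipliers_eq_top (h : IsArithmeticalRing R) {I : Ideal R}
    (hI : I.FG) :
    Ideal.span {s : R | ∃ a ∈ I, ∀ x ∈ I, s * x ∈ Ideal.span {a}} = ⊤ := by
  induction I, hI using Submodule.fg_induction with
  | singleton x =>
    exact (Ideal.eq_top_iff_one _).2 (Ideal.subset_span
      ⟨x, Ideal.mem_span_singleton_self x, fun y hy ↦ Ideal.mul_mem_left _ _ hy⟩)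
  | sup I J _ _ hI hJ =>
    rw [eq_top_iff, ← Ideal.top_mul ⊤]
    nth_rewrite 1 [← hI]
    rw [← hJ, Ideal.span_mul_span', Ideal.span_le]
    rintro _ ⟨s, ⟨a, ha, hs⟩, t, ⟨b, hb, ht⟩, rfl⟩
    obtain ⟨u, v, w, huv, huw⟩ := h a b
    have hsum : s * t = s * t * u + s * t * (1 - u) := by ring
    simp only [SetLike.mem_coe]
    rw [hsum]
    refine add_mem (Ideal.subset_span ⟨b, Ideal.mem_sup_right hb, fun x hx ↦ ?_⟩)
      (Ideal.subset_span ⟨a, Ideal.mem_sup_left ha, fun x hx ↦ ?_⟩)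
    all_goals
      obtain ⟨y, hy, z, hz, rfl⟩ := Submodule.mem_sup.1 hx
      obtain ⟨c, hc⟩ := Ideal.mem_span_singleton'.1 (hs y hy)
      obtain ⟨d, hd⟩ := Ideal.mem_span_singleton'.1 (ht z hz)
      rw [Ideal.mem_span_singleton']
    · exact ⟨t * c * v + s * u * d, by
        linear_combination t * u * hc + s * u * hd - t * c * huv⟩
    · exact ⟨t * (1 - u) * c + s * d * w, by
        linear_combination t * (1 - u) * hc + s * (1 - u) * hd - s * d * huw⟩

/-- If `s I ⊆ (a)`, division by `a` after multiplication by `s` can be made linear. -/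
theorem HasIdempotentSupports.exists_linearMap_mul_eq (h : HasIdempotentSupports R)
    {I : Ideal R} {s a : R} (hs : ∀ x ∈ I, s * x ∈ Ideal.span {a}) :
    ∃ φ : I →ₗ[R] R, ∀ x : I, φ x * a = s * x := by
  obtain ⟨f, hfa, hf⟩ := h a
  choose c hc using fun x : I ↦ Ideal.mem_span_singleton'.1 (hs x x.2)
  have key : ∀ y z : R, y * a = z * a → y * f = z * f := fun y z hyz ↦ by
    linear_combination hf (y - z) (by linear_combination hyz)
  refine ⟨{ toFun := fun x ↦ c x * f, map_add' := fun x y ↦ ?_, map_smul' := fun r x ↦ ?_ },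
    fun x ↦ ?_⟩
  · rw [← add_mul]
    apply key
    rw [add_mul, hc, hc, hc, Submodule.coe_add, mul_add]
  · rw [RingHom.id_apply, smul_eq_mul, ← mul_assoc]
    apply key
    rw [mul_assoc, hc, hc, Submodule.coe_smul, smul_eq_mul]
    ring
  · simp only [LinearMap.coe_mk, AddHom.coe_mk]
    rw [mul_assoc, hfa, hc]

theorem isSemihereditary_iff :
    IsSemihereditary R ↔ HasIdempotentSupports R ∧ IsArithmeticalRing R := by
  refine ⟨fun h ↦ ⟨h.hasIdempotentSupports, h.isArithmeticalRing⟩, fun ⟨hP, hA⟩ I hI ↦ ?_⟩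
  have key : ∀ r ∈ Ideal.span {s : R | ∃ a ∈ I, ∀ x ∈ I, s * x ∈ Ideal.span {a}},
      ∃ σ : I →ₗ[R] I →₀ R, ∀ x, Finsupp.linearCombination R id (σ x) = r • x := by
    intro r hr
    induction hr using Submodule.span_induction with
    | mem s hs =>
      obtain ⟨a, ha, hs⟩ := hs
      obtain ⟨φ, hφ⟩ := hP.exists_linearMap_mul_eq hs
      exact ⟨Finsupp.lsingle ⟨a, ha⟩ ∘ₗ φ, fun x ↦ Subtype.ext (by simpa using hφ x)⟩
    | zero => exact ⟨0, by simp⟩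
    | add r s _ _ hr hs =>
      obtain ⟨σ, hσ⟩ := hr
      obtain ⟨τ, hτ⟩ := hs
      exact ⟨σ + τ, fun x ↦ by simp [hσ, hτ, add_smul]⟩
    | smul c r _ hr =>
      obtain ⟨σ, hσ⟩ := hr
      exact ⟨c • σ, fun x ↦ by simp [hσ, mul_smul]⟩
  obtain ⟨σ, hσ⟩ := key 1 (by rw [hA.span_multipliers_eq_top hI]; trivial)
  exact ⟨σ, fun x ↦ by simpa using hσ x⟩

end Criterion

section AbsolutelyFlat

variable {T : Type*} [CommRing T]

/-- `f` and `g` have a common divisor with comaximal cofactors. -/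
def HasComaximalCofactors (f g : T) : Prop :=
  ∃ d f' g' p q : T, f = d * f' ∧ g = d * g' ∧ f' * p + g' * q = 1

theorem HasComaximalCofactors.symm {f g : T} (h : HasComaximalCofactors f g) :
    HasComaximalCofactors g f := by
  obtain ⟨d, f', g', p, q, hf, hg, h1⟩ := h
  exact ⟨d, g', f', q, p, hg, hf, by rw [add_comm, h1]⟩

theorem HasComaximalCofactors.of_sub_mul {f g : T} (h : T)
    (H : HasComaximalCofactors (f - h * g) g) : HasComaximalCofactors f g := by
  obtain ⟨d, f', g', p, q, hf, hg, h1⟩ := H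
  exact ⟨d, f' + h * g', g', p, q - h * p, by linear_combination hf + h * hg, hg,
    by linear_combination h1⟩

theorem HasComaximalCofactors.of_idempotent {f g e : T} (he : e * e = e)
    (h₁ : HasComaximalCofactors (e * f) (e * g))
    (h₂ : HasComaximalCofactors ((1 - e) * f) ((1 - e) * g)) : HasComaximalCofactors f g := by
  obtain ⟨d₁, f₁, g₁, p₁, q₁, hf₁, hg₁, h₁⟩ := h₁
  obtain ⟨d₂, f₂, g₂, p₂, q₂, hf₂, hg₂, h₂⟩ := h₂
  refine ⟨e * d₁ + (1 - e) * d₂, e * f₁ + (1 - e) * f₂, e * g₁ + (1 - e) * g₂,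
    e * p₁ + (1 - e) * p₂, e * q₁ + (1 - e) * q₂, ?_, ?_, ?_⟩
  · linear_combination e * hf₁ + (1 - e) * hf₂ +
      (-2 * f + d₁ * f₂ + d₂ * f₁ - d₁ * f₁ - d₂ * f₂) * he
  · linear_combination e * hg₁ + (1 - e) * hg₂ +
      (-2 * g + d₁ * g₂ + d₂ * g₁ - d₁ * g₁ - d₂ * g₂) * he
  · linear_combination e * h₁ + (1 - e) * h₂ +
      ((f₁ - f₂) * (p₁ - p₂) + (g₁ - g₂) * (q₁ - q₂)) * he

theorem hasComaximalCofactors_polynomial (hT : ∀ t : T, ∃ u : T, t = t * t * u) (f g : T[X]) :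
    HasComaximalCofactors f g := by
  suffices H : ∀ N m n : ℕ, m + n ≤ N → ∀ f g : T[X], (∀ k, m ≤ k → f.coeff k = 0) →
      (∀ k, n ≤ k → g.coeff k = 0) → HasComaximalCofactors f g from
    H _ (f.natDegree + 1) (g.natDegree + 1) le_rfl f g
      (fun k hk ↦ coeff_eq_zero_of_natDegree_lt hk)
      (fun k hk ↦ coeff_eq_zero_of_natDegree_lt hk)
  intro N
  induction N with
  | zero =>
    intro m n hmn f g hf hg
    have hg0 : g = 0 := by ext k; simpa using hg k (by omega)
    exact ⟨f, 1, 0, 1, 0, by simp, by simp [hg0], by simp⟩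
  | succ N ih =>
    intro m n hmn f g hf hg
    wlog hle : n ≤ m generalizing m n f g
    · exact (this n m (by omega) g f hg hf (by omega)).symm
    obtain _ | n := n
    · have hg0 : g = 0 := by ext k; simpa using hg k (by omega)
      exact ⟨f, 1, 0, 1, 0, by simp, by simp [hg0], by simp⟩
    obtain _ | m := m
    · omega
    obtain ⟨c, hc⟩ := hT (g.coeff n)
    have he : g.coeff n * c * (g.coeff n * c) = g.coeff n * c := by
      linear_combination -c * hc
    refine .of_idempotent (e := C (g.coeff n * c)) (by rw [← C_mul, he]) ?_ ?_
    · refine .of_sub_mul (C (f.coeff m * c) * X ^ (m - n)) ?_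
      refine ih m (n + 1) (by omega) _ _ (fun k hk ↦ ?_) (fun k hk ↦ ?_)
      · obtain ⟨j, rfl⟩ : ∃ j, k = j + (m - n) := ⟨k - (m - n), by omega⟩
        have hshift : C (f.coeff m * c) * X ^ (m - n) * (C (g.coeff n * c) * g) =
            C (f.coeff m * c * (g.coeff n * c)) * (g * X ^ (m - n)) := by
          simp only [C_mul]; ring
        rw [hshift, coeff_sub, coeff_C_mul, coeff_C_mul, coeff_mul_X_pow]
        obtain rfl | hj := eq_or_lt_of_le (show n ≤ j by omega)
        · rw [show n + (m - n) = m by omega]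
          linear_combination -f.coeff m * he
        · rw [hf _ (by omega), hg _ hj]
          ring
      · rw [coeff_C_mul, hg k hk, mul_zero]
    · rw [← C_1, ← C_sub]
      refine ih (m + 1) n (by omega) _ _ (fun k hk ↦ ?_) (fun k hk ↦ ?_)
      · rw [coeff_C_mul, hf k hk, mul_zero]
      · rw [coeff_C_mul]
        obtain rfl | hk := eq_or_lt_of_le hk
        · linear_combination hc
        · rw [hg k hk, mul_zero]

theorem exists_C_support (hT : ∀ t : T, ∃ u : T, t = t * t * u) (f : T[X]) :
    ∃ e : T, C e * f = f ∧ ∀ r : T[X], r * f = 0 → r * C e = 0 := by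
  suffices H : ∀ (n : ℕ) (f : T[X]), (∀ k, n ≤ k → f.coeff k = 0) →
      ∃ e : T, C e * f = f ∧ ∀ r : T[X], r * f = 0 → r * C e = 0 from
    H (f.natDegree + 1) f (fun k hk ↦ coeff_eq_zero_of_natDegree_lt hk)
  intro n
  induction n with
  | zero =>
    intro f hf
    have hf0 : f = 0 := by ext k; simpa using hf k (by omega)
    exact ⟨0, by simp [hf0], by simp⟩
  | succ n ih =>
    intro f hf
    obtain ⟨c, hc⟩ := hT (f.coeff n)
    obtain ⟨e', he', hr'⟩ := ih (C (1 - f.coeff n * c) * f) (fun k hk ↦ by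
      rw [coeff_C_mul]
      obtain rfl | hk := eq_or_lt_of_le hk
      · linear_combination hc
      · rw [hf k hk, mul_zero])
    have he : f.coeff n * c * (f.coeff n * c) = f.coeff n * c := by
      linear_combination -c * hc
    set e := f.coeff n * c
    have hC : (C e * C e : T[X]) = C e := by rw [← C_mul, he]
    have hmonic : (C c * f + C (1 - e) * X ^ n).Monic := by
      refine monic_of_natDegree_le_of_coeff_eq_one n ?_ ?_
      · rw [natDegree_le_iff_coeff_eq_zero]
        intro k hk
        rw [coeff_add, coeff_C_mul, coeff_C_mul, hf k hk, coeff_X_pow, if_neg hk.ne']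
        ring
      · rw [coeff_add, coeff_C_mul, coeff_C_mul, coeff_X_pow, if_pos rfl]
        ring
    refine ⟨e + (1 - e) * e', ?_, fun r hr ↦ ?_⟩
    · simp only [C_add, C_sub, C_mul, C_1] at he' ⊢
      linear_combination he'
    · have h₁ : r * C e = 0 := by
        refine hmonic.isRegular.right.mul_right_eq_zero_iff.1 ?_
        simp only [C_sub, C_1]
        linear_combination C e * C c * hr - r * X ^ n * hC
      have h₂ := hr' r (by linear_combination C (1 - e) * hr)
      simp only [C_add, C_sub, C_mul, C_1]
      linear_combination h₁ + (1 - C e) * h₂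

end AbsolutelyFlat

section TotalQuotientRing

variable {R T : Type*} [CommRing R] [CommRing T] [Algebra R T] [IsFractionRing R T]

theorem HasIdempotentSupports.exists_eq_mul_mul (h : HasIdempotentSupports R) (t : T) :
    ∃ u : T, t = t * t * u := by
  obtain ⟨a, b, rfl⟩ := IsLocalization.exists_mk'_eq (nonZeroDivisors R) t
  obtain ⟨f, hfa, hf⟩ := h a
  have hff := hf (1 - f) (by linear_combination -hfa)
  have hreg : a + 1 - f ∈ nonZeroDivisors R := by
    rw [mem_nonZeroDivisors_iff_right]
    intro r hr
    have hra : r * a = 0 := by linear_combination f * hr - r * hfa - r * hff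
    linear_combination hr - hra + hf r hra
  refine ⟨IsLocalization.mk' T (b : R) ⟨_, hreg⟩, ?_⟩
  rw [← IsLocalization.mk'_mul, ← IsLocalization.mk'_mul, IsLocalization.mk'_eq_iff_eq]
  congr 1
  simp only [Submonoid.coe_mul]
  linear_combination (-(b : R) * b) * hfa

theorem HasIdempotentSupports.mem_range_of_idempotent (h : HasIdempotentSupports R) {e : T}
    (he : e * e = e) : e ∈ (algebraMap R T).range := by
  obtain ⟨a, b, rfl⟩ := IsLocalization.exists_mk'_eq (nonZeroDivisors R) e
  obtain ⟨f, hfa, hf⟩ := h a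
  refine ⟨f, ?_⟩
  have hb := IsLocalization.map_units T b
  set e := IsLocalization.mk' T a b
  have heb : e * algebraMap R T b = algebraMap R T a := IsLocalization.mk'_spec T a b
  have h₁ : algebraMap R T f * e = e := by
    refine hb.mul_left_injective ?_
    simp only
    rw [mul_assoc, heb, ← map_mul, hfa]
  have h₂ : (algebraMap R T b - algebraMap R T a) * algebraMap R T f = 0 := by
    rw [← map_sub, ← map_mul, hf, map_zero]
    apply IsFractionRing.injective R T
    rw [map_mul, map_sub, map_zero, ← heb]
    linear_combination (-(algebraMap R T b) ^ 2) * he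
  refine hb.mul_left_injective ?_
  simp only
  linear_combination h₂ - algebraMap R T f * heb + algebraMap R T b * h₁

theorem IsArithmeticalRing.exists_mul_eq (h : IsArithmeticalRing R) (α β : T) :
    ∃ u v w : R, algebraMap R T u * α = algebraMap R T v * β ∧
      (1 - algebraMap R T u) * β = algebraMap R T w * α := by
  obtain ⟨c, hc⟩ := IsLocalization.exist_integer_multiples_of_finset (nonZeroDivisors R)
    ({α, β} : Set T).toFinite.toFinset
  obtain ⟨a, ha⟩ := hc α (by simp)
  obtain ⟨b, hb⟩ := hc β (by simp)
  obtain ⟨u, v, w, huv, huw⟩ := h a b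
  have huv' := congrArg (algebraMap R T) huv
  have huw' := congrArg (algebraMap R T) huw
  have hunit := IsLocalization.map_units T c
  simp only [map_mul, map_sub, map_one, ha, hb, Algebra.smul_def] at huv' huw'
  refine ⟨u, v, w, hunit.mul_left_injective ?_, hunit.mul_left_injective ?_⟩
  · simp only
    linear_combination huv'
  · simp only
    linear_combination huw'

variable (R T) in
/-- The ring `R + X T[X]` of polynomials over `T` with constant term in `R`. -/
noncomputable abbrev constantTermSubring : Subring T[X] :=
  Subring.comap constantCoeff (algebraMap R T).range

theorem HasIdempotentSupports.of_constantTermSubring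
    (h : HasIdempotentSupports (constantTermSubring R T)) : HasIdempotentSupports R := by
  intro a
  obtain ⟨⟨f, φ, hφ⟩, hfa, hf⟩ := h ⟨C (algebraMap R T a), a, by simp⟩
  rw [constantCoeff_apply] at hφ
  refine ⟨φ, IsFractionRing.injective R T ?_, fun r hr ↦ IsFractionRing.injective R T ?_⟩
  · simpa [hφ] using congrArg (fun p ↦ p.1.coeff 0) hfa
  · have := hf ⟨C (algebraMap R T r), r, by simp⟩
      (Subtype.ext (by simp [← map_mul, hr]))
    simpa [hφ] using congrArg (fun p ↦ p.1.coeff 0) this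

theorem IsArithmeticalRing.of_constantTermSubring
    (h : IsArithmeticalRing (constantTermSubring R T)) : IsArithmeticalRing R := by
  intro a b
  obtain ⟨⟨u, u₀, hu⟩, ⟨v, v₀, hv⟩, ⟨w, w₀, hw⟩, huv, huw⟩ :=
    h ⟨C (algebraMap R T a), a, by simp⟩ ⟨C (algebraMap R T b), b, by simp⟩
  rw [constantCoeff_apply] at hu hv hw
  refine ⟨u₀, v₀, w₀, IsFractionRing.injective R T ?_, IsFractionRing.injective R T ?_⟩
  · simpa [hu, hv] using congrArg (fun p ↦ p.1.coeff 0) huv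
  · simpa [hu, hw] using congrArg (fun p ↦ p.1.coeff 0) huw

theorem HasIdempotentSupports.constantTermSubring (h : HasIdempotentSupports R) :
    HasIdempotentSupports (constantTermSubring R T) := by
  rintro ⟨f, hf⟩
  obtain ⟨e, hef, he⟩ := exists_C_support (h.exists_eq_mul_mul (T := T)) f
  have hee : e * e = e := by
    have := he (1 - C e) (by linear_combination -hef)
    apply C_injective
    rw [C_mul]
    linear_combination -this
  have hmem : C e ∈ _root_.constantTermSubring R T := by
    simpa using h.mem_range_of_idempotent hee
  exact ⟨⟨C e, hmem⟩, Subtype.ext hef,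
    fun r hr ↦ Subtype.ext (he r.1 (congrArg Subtype.val hr))⟩

theorem IsArithmeticalRing.constantTermSubring (h : IsArithmeticalRing R)
    (hT : ∀ t : T, ∃ u : T, t = t * t * u) :
    IsArithmeticalRing (constantTermSubring R T) := by
  rintro ⟨f, hf⟩ ⟨g, hg⟩
  obtain ⟨d, f', g', p, q, hf', hg', h1⟩ := hasComaximalCofactors_polynomial hT f g
  obtain ⟨u, v, w, huv, huw⟩ := h.exists_mul_eq (f'.coeff 0) (g'.coeff 0)
  have h1' : f'.coeff 0 * p.coeff 0 + g'.coeff 0 * q.coeff 0 = 1 := by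
    simpa using congrArg (fun p ↦ p.coeff 0) h1
  set α := f'.coeff 0 with hα
  set β := g'.coeff 0 with hβ
  set p₀ := p.coeff 0 with hp₀
  set q₀ := q.coeff 0 with hq₀
  set u₀ := algebraMap R T u with hu₀
  set v₀ := algebraMap R T v with hv₀
  set w₀ := algebraMap R T w with hw₀
  -- Adjust the Bézout coefficients so that their constant terms are `y₀` and `z₀`.
  obtain ⟨y₀, hy₀⟩ : ∃ y₀, y₀ = v₀ * p₀ + u₀ * q₀ := ⟨_, rfl⟩
  obtain ⟨z₀, hz₀⟩ : ∃ z₀, z₀ = (1 - u₀) * p₀ + w₀ * q₀ := ⟨_, rfl⟩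
  have hβy : β * y₀ = u₀ := by linear_combination β * hy₀ - p₀ * huv + u₀ * h1'
  have hαy : α * y₀ = v₀ := by linear_combination α * hy₀ + q₀ * huv + v₀ * h1'
  have hβz : β * z₀ = w₀ := by linear_combination β * hz₀ + p₀ * huw + w₀ * h1'
  have hαz : α * z₀ = 1 - u₀ := by
    linear_combination α * hz₀ - q₀ * huw + (1 - u₀) * h1'
  obtain ⟨k, hk⟩ : ∃ k, k = p₀ * y₀ - q₀ * z₀ := ⟨_, rfl⟩
  have hy : (q + f' * C k).coeff 0 = y₀ := by
    rw [coeff_add, coeff_mul_C, ← hα, ← hq₀, hk]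
    linear_combination y₀ * h1' - q₀ * hαz - q₀ * hβy
  have hz : (p - g' * C k).coeff 0 = z₀ := by
    rw [coeff_sub, coeff_mul_C, ← hβ, ← hp₀, hk]
    linear_combination z₀ * h1' - p₀ * hβy - p₀ * hαz
  refine ⟨⟨g' * (q + f' * C k), u, ?_⟩, ⟨f' * (q + f' * C k), v, ?_⟩,
    ⟨g' * (p - g' * C k), w, ?_⟩, Subtype.ext ?_, Subtype.ext ?_⟩
  · rw [constantCoeff_apply, mul_coeff_zero, hy, hβy]
  · rw [constantCoeff_apply, mul_coeff_zero, hy, hαy]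
  · rw [constantCoeff_apply, mul_coeff_zero, hz, hβz]
  · simp only [Subring.coe_mul]
    rw [hf', hg']
    ring
  · simp only [Subring.coe_mul, AddSubgroupClass.coe_sub, Subring.coe_one]
    rw [hf', hg']
    linear_combination -d * g' * h1

end TotalQuotientRing

theorem stmt9 {R : Type*} [CommRing R] :
    IsSemihereditary
        (Subring.comap
          (Polynomial.constantCoeff : Polynomial (FractionRing R) →+* FractionRing R)
          (algebraMap R (FractionRing R)).range) ↔
      (IsSemihereditary R ∧ ∀ t : FractionRing R, ∃ u : FractionRing R, t = t * t * u) := by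
  simp only [isSemihereditary_iff]
  constructor
  · rintro ⟨hP, hA⟩
    have hR := HasIdempotentSupports.of_constantTermSubring hP
    exact ⟨⟨hR, IsArithmeticalRing.of_constantTermSubring hA⟩, hR.exists_eq_mul_mul⟩
  · rintro ⟨⟨hP, hA⟩, hT⟩
    exact ⟨hP.constantTermSubring, hA.constantTermSubring hT⟩
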